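/- arXiv:1208.2846 — 5 statements merged into one kernel-verified Lean document; each statement's English description precedes it below -/
import Mathlib

section
/- Any cell-probe data structure with word size w that solves the indexing problem on k binary strings of length n using a non-adaptive query algorithm with query time t_q and an (arbitrary, possibly adaptive) update algorithm with update time t_u must satisfy k·n ≤ (k·t_q + n·t_u)·w. In particular, either t_q = Ω(n/w) or t_u = Ω(k/w), regardless of preprocessing time and space usage. -/
/-- A memory state with word size `w`: each of the `2^w` cell addresses stores a `w`-bit word. -/
abbrev Memory (w : ℕ) := Fin (2 ^ w) → BitVec w

/-- Execute the first `k` steps of an adaptive update operation with `t` steps, given by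
address functions `addr` (mapping the words read at previous steps to the next probed
address) and write functions `wr` (mapping the words read so far, including the current
step, to the word overwriting the probed cell).  Returns the resulting memory together
with the sequence of words read (each as it was when the step read the cell, before the
overwrite). -/
def runUpdateAux (w t : ℕ)
    (addr : (s : Fin t) → (Fin s.val → BitVec w) → Fin (2 ^ w))
    (wr : (s : Fin t) → (Fin (s.val + 1) → BitVec w) → BitVec w) :
    (k : ℕ) → k ≤ t → Memory w → Memory w × (Fin k → BitVec w)
  | 0, _, M => (M, fun i => i.elim0)
  | k + 1, h, M =>
    let prev := runUpdateAux w t addr wr k (Nat.le_of_succ_le h) M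
    let s : Fin t := ⟨k, h⟩
    let a : Fin (2 ^ w) := addr s prev.2
    let reads' : Fin (k + 1) → BitVec w := Fin.snoc prev.2 (prev.1 a)
    (Function.update prev.1 a (wr s reads'), reads')

/-- The memory resulting from executing all `t` steps of an adaptive update operation. -/
def runUpdate (w t : ℕ)
    (addr : (s : Fin t) → (Fin s.val → BitVec w) → Fin (2 ^ w))
    (wr : (s : Fin t) → (Fin (s.val + 1) → BitVec w) → BitVec w)
    (M : Memory w) : Memory w :=
  (runUpdateAux w t addr wr t le_rfl M).1

/-- Executing a finite sequence of adaptive update operations in order, where update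
`j : Fin n` has address functions `uaddr j` and write functions `uwr j`. -/
def runUpdates (w n t : ℕ)
    (uaddr : Fin n → (s : Fin t) → (Fin s.val → BitVec w) → Fin (2 ^ w))
    (uwr : Fin n → (s : Fin t) → (Fin (s.val + 1) → BitVec w) → BitVec w)
    (js : List (Fin n)) (M : Memory w) : Memory w :=
  js.foldl (fun M j => runUpdate w t (uaddr j) (uwr j) M) M

/-!
The input is encoded by the words that `P S` stores in the query cells, together with the words
read by each single update `j` executed on `P S`. Two memories that agree on the cells of `Q i` and
from which update `j` reads the same words still agree on these cells after the update, since equal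
reads force equal probes and equal writes. So query `i` returns the same bit `S i j` on both: the
encoding is injective, hence at least as long as the input.
-/

section Update

variable {w t : ℕ} (addr : (s : Fin t) → (Fin s.val → BitVec w) → Fin (2 ^ w))
  (wr : (s : Fin t) → (Fin (s.val + 1) → BitVec w) → BitVec w)

/-- The transcript of an adaptive update operation: the word read at each step when the operation
is executed on `M`, as it was just before the step overwrote it. -/
def updateReads (M : Memory w) : Fin t → BitVec w :=
  (runUpdateAux w t addr wr t le_rfl M).2

variable {addr wr} {M M' : Memory w} {U : Set (Fin (2 ^ w))}

theorem runUpdateAux_eqOn (hM : Set.EqOn M M' U) {m : ℕ} (hm : m ≤ t)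
    (hreads : (runUpdateAux w t addr wr m hm M).2 = (runUpdateAux w t addr wr m hm M').2) :
    Set.EqOn (runUpdateAux w t addr wr m hm M).1 (runUpdateAux w t addr wr m hm M').1 U := by
  induction m with
  | zero => exact hM
  | succ m ih =>
    have hm' : m ≤ t := Nat.le_of_succ_le hm
    intro c hc
    simp only [runUpdateAux, Function.update_apply] at hreads ⊢
    have hprev : (runUpdateAux w t addr wr m hm' M).2 = (runUpdateAux w t addr wr m hm' M').2 :=
      (Fin.snoc_inj.1 hreads).1
    rw [hreads, hprev, ih hm' hprev hc]

theorem runUpdate_eqOn (hM : Set.EqOn M M' U)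
    (hreads : updateReads addr wr M = updateReads addr wr M') :
    Set.EqOn (runUpdate w t addr wr M) (runUpdate w t addr wr M') U :=
  runUpdateAux_eqOn hM le_rfl hreads

end Update

theorem card_le_card_mul_of_injective {α β : Type*} [Fintype α] [Fintype β] {w : ℕ}
    {f : (α → Bool) → β → BitVec w} (hf : Function.Injective f) :
    Fintype.card α ≤ Fintype.card β * w := by
  classical
  have hword : Fintype.card (BitVec w) = 2 ^ w := by
    rw [← FinEnum.card_eq_fintypeCard, FinEnum.card_bitVec]
  have hpow : 2 ^ Fintype.card α ≤ 2 ^ (Fintype.card β * w) := by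
    simpa [hword, ← pow_mul, mul_comm w] using Fintype.card_le_of_injective f hf
  exact (Nat.pow_le_pow_iff_right one_lt_two).1 hpow

section Indexing

variable {ι κ : Type*} {w : ℕ} (Q : ι → Finset (Fin (2 ^ w))) {t : κ → ℕ}
  (uaddr : (j : κ) → (s : Fin (t j)) → (Fin s.val → BitVec w) → Fin (2 ^ w))
  (uwr : (j : κ) → (s : Fin (t j)) → (Fin (s.val + 1) → BitVec w) → BitVec w)

/-- The encoding of a memory state `M` from which the result of any single update followed by any
query can be recovered: the words of `M` in the query cells and the words read by each update on
`M`, one word for every (query, probed cell) pair and every (update, step) pair. -/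
def probeEncoding (M : Memory w) : (Σ i, Q i) ⊕ (Σ j, Fin (t j)) → BitVec w :=
  Sum.elim (fun p => M p.2) (fun p => updateReads (uaddr p.1) (uwr p.1) M p.2)

variable {Q uaddr uwr}

theorem runUpdate_eqOn_of_probeEncoding_eq {M M' : Memory w}
    (h : probeEncoding Q uaddr uwr M = probeEncoding Q uaddr uwr M') (i : ι) (j : κ) :
    Set.EqOn (runUpdate w (t j) (uaddr j) (uwr j) M) (runUpdate w (t j) (uaddr j) (uwr j) M')
      (Q i) :=
  runUpdate_eqOn (fun c hc => congrFun h (.inl ⟨i, c, hc⟩))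
    (funext fun s => congrFun h (.inr ⟨j, s⟩))

theorem probeEncoding_injective_of_solves {ans : (i : ι) → (Q i → BitVec w) → Bool}
    {P : (ι → κ → Bool) → Memory w}
    (hsolve : ∀ S j i, ans i (fun c => runUpdate w (t j) (uaddr j) (uwr j) (P S) c) = S i j) :
    Function.Injective fun S => probeEncoding Q uaddr uwr (P S) := by
  intro S S' h
  ext i j
  rw [← hsolve S j i, ← hsolve S' j i]
  congr 1
  funext c
  exact runUpdate_eqOn_of_probeEncoding_eq h i j c.2

theorem indexing_nonadaptive_query_lb_general [Fintype ι] [Fintype κ]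
    (ans : (i : ι) → (Q i → BitVec w) → Bool) (P : (ι → κ → Bool) → Memory w)
    (hsolve : ∀ S j i, ans i (fun c => runUpdate w (t j) (uaddr j) (uwr j) (P S) c) = S i j) :
    Fintype.card ι * Fintype.card κ ≤ (∑ i, (Q i).card + ∑ j, t j) * w := by
  have hinj : Function.Injective fun S : ι × κ → Bool =>
      probeEncoding Q uaddr uwr (P (Function.curry S)) :=
    (probeEncoding_injective_of_solves hsolve).comp Function.curry_injective
  simpa using card_le_card_mul_of_injective hinj

end Indexing

/-- Any cell-probe data structure with word size `w` solving the indexing problem on `k`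
binary strings of length `n`, using a non-adaptive query algorithm `(Q, ans)` with query
time `t_q` (query `i` probes the at most `t_q` cells of `Q i` and answers a function of
their contents) and an adaptive update algorithm `(uaddr, uwr)` with update time `t_u`,
must satisfy `k * n ≤ (k * t_q + n * t_u) * w`; in particular either `t_q = Ω(n/w)` or
`t_u = Ω(k/w)`. -/
theorem indexing_nonadaptive_query_lb
    (w n k t_q t_u : ℕ)
    (Q : Fin k → Finset (Fin (2 ^ w)))
    (hQ : ∀ i, (Q i).card ≤ t_q)
    (ans : (i : Fin k) → (↥(Q i) → BitVec w) → Bool)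
    (uaddr : Fin n → (s : Fin t_u) → (Fin s.val → BitVec w) → Fin (2 ^ w))
    (uwr : Fin n → (s : Fin t_u) → (Fin (s.val + 1) → BitVec w) → BitVec w)
    (P : (Fin k → Fin n → Bool) → Memory w)
    (hsolve : ∀ (S : Fin k → Fin n → Bool) (js : List (Fin n)) (hjs : js ≠ [])
      (i : Fin k),
      ans i (fun c => runUpdates w n t_u uaddr uwr js (P S) c.val)
        = S i (js.getLast hjs)) :
    k * n ≤ (k * t_q + n * t_u) * w := by
  calc
    k * n ≤ (∑ i, (Q i).card + ∑ _j : Fin n, t_u) * w := by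
      simpa using indexing_nonadaptive_query_lb_general ans P fun S j i =>
        hsolve S [j] (List.cons_ne_nil j []) i
    _ ≤ (k * t_q + n * t_u) * w := by
      gcongr
      · simpa using Finset.sum_le_card_nsmul Finset.univ _ t_q fun i _ => hQ i
      · simp
end

section
/- Any cell-probe data structure with word size w that solves the set disjointness problem on universe [n] using a memoryless update algorithm and an (arbitrary, possibly adaptive) query algorithm with query time t_q must satisfy n ≤ 3·t_q·w; in particular t_q = Ω(n/w), regardless of the preprocessing time, space usage and update time. -/
/-- Executing a single memoryless update `x`: cell `c` is mapped through `g x c` if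
`c` belongs to the probe set `U x`, and is left unchanged otherwise. -/
def memStep (w n : ℕ) (U : Fin n → Finset (Fin (2 ^ w)))
    (g : Fin n → Fin (2 ^ w) → BitVec w → BitVec w)
    (x : Fin n) (M : Memory w) : Memory w :=
  fun c => if c ∈ U x then g x c (M c) else M c

/-- Executing a finite sequence of memoryless updates in order. -/
def memExec (w n : ℕ) (U : Fin n → Finset (Fin (2 ^ w)))
    (g : Fin n → Fin (2 ^ w) → BitVec w → BitVec w)
    (xs : List (Fin n)) (M : Memory w) : Memory w :=
  xs.foldl (fun M x => memStep w n U g x M) M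

/-- The sequence of words read by an adaptive query algorithm with address functions `addr`
on memory `M`: at step `s` it reads the cell whose address is determined by the words read
at the previous steps. -/
def queryReads (w t : ℕ) (M : Memory w)
    (addr : (s : Fin t) → (Fin s.val → BitVec w) → Fin (2 ^ w)) :
    Fin t → BitVec w
  | s => M (addr s (fun j => queryReads w t M addr ⟨j.val, j.isLt.trans s.isLt⟩))
  termination_by s => s.val

section Transcript

variable {A W : Type*} {t : ℕ} {addr : (s : Fin t) → (Fin s.val → W) → A} {M M' : A → W}
  {r r' : Fin t → W}

/-- The address probed at step `s` by the adaptive query algorithm `addr` when the words read are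
those of `r`; only the entries of `r` before `s` matter. -/
def probedCell (addr : (s : Fin t) → (Fin s.val → W) → A) (r : Fin t → W) (s : Fin t) : A :=
  addr s fun j => r ⟨j.val, j.isLt.trans s.isLt⟩

/-- `r` is the transcript of the adaptive query algorithm `addr` on the memory `M`: the sequence of
words it reads, given by the equations it satisfies rather than by recursion. -/
def IsTranscript (addr : (s : Fin t) → (Fin s.val → W) → A) (M : A → W) (r : Fin t → W) : Prop :=
  ∀ s, r s = M (probedCell addr r s)

theorem IsTranscript.unique (h : IsTranscript addr M r) (h' : IsTranscript addr M r') :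
    r = r' := by
  funext s
  induction s using WellFoundedLT.induction with
  | ind s ih =>
    have same_cell : probedCell addr r s = probedCell addr r' s :=
      congrArg (addr s) (funext fun j => ih ⟨j.val, j.isLt.trans s.isLt⟩ j.isLt)
    rw [h s, h' s, same_cell]

theorem IsTranscript.congr (h : IsTranscript addr M r)
    (hM : ∀ s, M (probedCell addr r s) = M' (probedCell addr r s)) : IsTranscript addr M' r :=
  fun s => (h s).trans (hM s)

end Transcript

theorem queryReads_isTranscript (w t : ℕ) (M : Memory w)
    (addr : (s : Fin t) → (Fin s.val → BitVec w) → Fin (2 ^ w)) :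
    IsTranscript addr M (queryReads w t M addr) :=
  fun s => by rw [queryReads]; rfl

theorem memExec_apply (w n : ℕ) (U : Fin n → Finset (Fin (2 ^ w)))
    (g : Fin n → Fin (2 ^ w) → BitVec w → BitVec w) (xs : List (Fin n)) (M : Memory w)
    (c : Fin (2 ^ w)) :
    memExec w n U g xs M c = xs.foldl (fun v x => if c ∈ U x then g x c v else v) (M c) :=
  (List.foldl_hom (fun M : Memory w => M c) fun _ _ => rfl).symm

section Disjointness

variable {α A W : Type*} [Fintype α] {t : ℕ}
  {addr : (s : Fin t) → (Fin s.val → W) → A} {accept : (Fin t → W) → Prop}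
  {P : Finset α → A → W} {update : Finset α → A → W → W}
  {reads : Finset α → Finset α → Fin t → W}

/-- The code of `S` in the counting argument: the words read by the query on `S` and `Sᶜ`, and the
words that preprocessing `S` had put in the probed cells. -/
def complementCode [DecidableEq α] (addr : (s : Fin t) → (Fin s.val → W) → A)
    (P : Finset α → A → W) (reads : Finset α → Finset α → Fin t → W) (S : Finset α) :
    (Fin t → W) × (Fin t → W) :=
  (reads S Sᶜ, fun s => P S (probedCell addr (reads S Sᶜ) s))

theorem reads_eq_of_complementCode_eq [DecidableEq α]
    (hreads : ∀ S T, IsTranscript addr (fun c => update T c (P S c)) (reads S T))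
    {S S' : Finset α} (h : complementCode addr P reads S = complementCode addr P reads S') :
    reads S Sᶜ = reads S' Sᶜ := by
  obtain ⟨same_reads, same_contents⟩ := Prod.mk.inj h
  rw [← same_reads] at same_contents
  have transcript_S' : IsTranscript addr (fun c => update Sᶜ c (P S' c)) (reads S Sᶜ) :=
    (hreads S Sᶜ).congr fun s => congrArg (update Sᶜ _) (congrFun same_contents s)
  exact transcript_S'.unique (hreads S' Sᶜ)

theorem complementCode_injective [DecidableEq α]
    (hreads : ∀ S T, IsTranscript addr (fun c => update T c (P S c)) (reads S T))
    (hsolve : ∀ S T, accept (reads S T) ↔ Disjoint S T) :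
    Function.Injective (complementCode addr P reads) := by
  have subset_of_eq {S S' : Finset α}
      (h : complementCode addr P reads S = complementCode addr P reads S') : S' ⊆ S := by
    have accepted : accept (reads S Sᶜ) := (hsolve S Sᶜ).2 disjoint_compl_right
    rw [reads_eq_of_complementCode_eq hreads h, hsolve] at accepted
    exact disjoint_compl_right_iff.1 accepted
  exact fun S S' h => (subset_of_eq h.symm).antisymm (subset_of_eq h)

/-- `update T c` is the combined effect on cell `c` of inserting the elements of `T`: composites of
memoryless updates are again cellwise. -/
theorem set_disjointness_memoryless_lb_general [Fintype W] {w : ℕ}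
    (hW : Fintype.card W ≤ 2 ^ w)
    (hreads : ∀ S T, IsTranscript addr (fun c => update T c (P S c)) (reads S T))
    (hsolve : ∀ S T, accept (reads S T) ↔ Disjoint S T) :
    Fintype.card α ≤ 2 * t * w := by
  classical
  refine (Nat.pow_le_pow_iff_right one_lt_two).1 ?_
  calc
    2 ^ Fintype.card α = Fintype.card (Finset α) := Fintype.card_finset.symm
    _ ≤ Fintype.card ((Fin t → W) × (Fin t → W)) :=
      Fintype.card_le_of_injective _ (complementCode_injective hreads hsolve)
    _ = Fintype.card W ^ (2 * t) := by
      rw [Fintype.card_prod, Fintype.card_fun, Fintype.card_fin, ← pow_add, two_mul]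
    _ ≤ (2 ^ w) ^ (2 * t) := Nat.pow_le_pow_left hW _
    _ = 2 ^ (2 * t * w) := by rw [← pow_mul, mul_comm]

end Disjointness

/-- Any cell-probe data structure with word size `w` solving set disjointness on universe
`[n]` with a memoryless update algorithm `(U, g)` and an adaptive query algorithm
`(addr, ans)` with query time `t_q` must satisfy `n ≤ 3 * t_q * w`. -/
theorem set_disjointness_memoryless_lb
    (w n t_q : ℕ)
    (U : Fin n → Finset (Fin (2 ^ w)))
    (g : Fin n → Fin (2 ^ w) → BitVec w → BitVec w)
    (addr : (s : Fin t_q) → (Fin s.val → BitVec w) → Fin (2 ^ w))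
    (ans : (Fin t_q → BitVec w) → Bool)
    (P : Finset (Fin n) → Memory w)
    (hsolve : ∀ S T : Finset (Fin n),
      ans (queryReads w t_q (memExec w n U g (T.sort (· ≤ ·)) (P S)) addr)
        = decide (S ∩ T = ∅)) :
    n ≤ 3 * t_q * w := by
  have general_bound : Fintype.card (Fin n) ≤ 2 * t_q * w :=
    set_disjointness_memoryless_lb_general (addr := addr) (accept := fun r => ans r = true)
      (P := P)
      (update := fun T c v =>
        (T.sort (· ≤ ·)).foldl (fun v x => if c ∈ U x then g x c v else v) v)
      (reads := fun S T => queryReads w t_q (memExec w n U g (T.sort (· ≤ ·)) (P S)) addr)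
      (FinEnum.card_eq_fintypeCard.symm.trans (FinEnum.card_bitVec w)).le
      (fun S T => (queryReads_isTranscript w t_q _ addr).congr fun s =>
        memExec_apply w n U g _ (P S) _)
      (fun S T => by rw [hsolve, decide_eq_true_iff, Finset.disjoint_iff_inter_eq_empty])
  calc
    n = Fintype.card (Fin n) := (Fintype.card_fin n).symm
    _ ≤ 2 * t_q * w := general_bound
    _ ≤ 3 * t_q * w := by gcongr; norm_num
end

section
/- Let a cell-probe data structure with word size w solve the set disjointness problem on universe [n] with a memoryless update algorithm and an adaptive query algorithm. Fix S ⊆ Fin n, let M* be the memory obtained by preprocessing S and then inserting the elements of the complement Fin n \ S in increasing order, and let C be the set of addresses probed by the query algorithm when run on M*. Then for every T ⊆ Fin n, if the memory M_T obtained by preprocessing S and inserting the elements of T in increasing order agrees with M* on every address in C, then the query run on M_T probes exactly the cells of C and answers 'disjoint'; in particular S ∩ T = ∅. -/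
/-- The address probed at step `s` by the adaptive query algorithm on memory `M`. -/
def queryAddr (w t : ℕ) (M : Memory w)
    (addr : (s : Fin t) → (Fin s.val → BitVec w) → Fin (2 ^ w))
    (s : Fin t) : Fin (2 ^ w) :=
  addr s (fun j => queryReads w t M addr ⟨j.val, j.isLt.trans s.isLt⟩)

/-! Each address an adaptive query probes is a function of the words it has already read. So if a
second memory agrees with the first on the cells probed in the first, then by induction on the step
the two runs read the same words at the same addresses, and they give the same answer. On `M*` that
answer is `disjoint`, hence so it is on `M_T`, and correctness of the query gives `S ∩ T = ∅`. -/

section Query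

variable {w t : ℕ} {M N : Memory w} {addr : (s : Fin t) → (Fin s.val → BitVec w) → Fin (2 ^ w)}
  {s : Fin t}

theorem queryReads_eq_apply_queryAddr :
    queryReads w t M addr s = M (queryAddr w t M addr s) := by
  rw [queryReads, queryAddr]

theorem queryAddr_congr (h : ∀ r < s, queryReads w t N addr r = queryReads w t M addr r) :
    queryAddr w t N addr s = queryAddr w t M addr s :=
  congrArg (addr s) (funext fun j => h ⟨j, j.isLt.trans s.isLt⟩ j.isLt)

theorem queryReads_congr
    (h : ∀ r ≤ s, N (queryAddr w t M addr r) = M (queryAddr w t M addr r)) :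
    queryReads w t N addr s = queryReads w t M addr s := by
  induction s using WellFoundedLT.induction with
  | ind s ih =>
    have reads_before : ∀ r < s, queryReads w t N addr r = queryReads w t M addr r :=
      fun r hr => ih r hr fun q hq => h q (hq.trans hr.le)
    calc queryReads w t N addr s
        = N (queryAddr w t N addr s) := queryReads_eq_apply_queryAddr
      _ = N (queryAddr w t M addr s) := by rw [queryAddr_congr reads_before]
      _ = M (queryAddr w t M addr s) := h s le_rfl
      _ = queryReads w t M addr s := queryReads_eq_apply_queryAddr.symm

end Query

theorem memoryless_disjointness_decoding_general {α : Type*} [DecidableEq α] {w t : ℕ}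
    {addr : (s : Fin t) → (Fin s.val → BitVec w) → Fin (2 ^ w)}
    {ans : (Fin t → BitVec w) → Bool} {mem : Finset α → Memory w} {S R : Finset α}
    (hsolve : ∀ T, ans (queryReads w t (mem T) addr) = decide (S ∩ T = ∅)) (hR : S ∩ R = ∅)
    (T : Finset α)
    (hagree : ∀ c ∈ Finset.image (queryAddr w t (mem R) addr) Finset.univ, mem T c = mem R c) :
    Finset.image (queryAddr w t (mem T) addr) Finset.univ =
        Finset.image (queryAddr w t (mem R) addr) Finset.univ ∧
      ans (queryReads w t (mem T) addr) = true ∧ S ∩ T = ∅ := by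
  have reads_eq : ∀ s, queryReads w t (mem T) addr s = queryReads w t (mem R) addr s :=
    fun s => queryReads_congr fun r _ => hagree _ (Finset.mem_image_of_mem _ (Finset.mem_univ r))
  have addr_eq : queryAddr w t (mem T) addr = queryAddr w t (mem R) addr :=
    funext fun s => queryAddr_congr fun r _ => reads_eq r
  have answer : ans (queryReads w t (mem T) addr) = true := by
    rw [funext reads_eq, hsolve R, decide_eq_true hR]
  exact ⟨by rw [addr_eq], answer, of_decide_eq_true ((hsolve T).symm.trans answer)⟩

/-- Fix `S ⊆ Fin n`, let `M*` be the memory obtained by preprocessing `S` and inserting the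
elements of the complement of `S` in increasing order, and let `C` be the set of addresses
probed by the adaptive query algorithm on `M*`.  For every `T`, if the memory obtained by
preprocessing `S` and inserting the elements of `T` in increasing order agrees with `M*` on
every address of `C`, then the query run on that memory probes exactly the cells of `C` and
answers `disjoint`; in particular `S ∩ T = ∅`. -/
theorem memoryless_disjointness_decoding
    (w n t_q : ℕ)
    (U : Fin n → Finset (Fin (2 ^ w)))
    (g : Fin n → Fin (2 ^ w) → BitVec w → BitVec w)
    (addr : (s : Fin t_q) → (Fin s.val → BitVec w) → Fin (2 ^ w))
    (ans : (Fin t_q → BitVec w) → Bool)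
    (P : Finset (Fin n) → Memory w)
    (hsolve : ∀ S T : Finset (Fin n),
      ans (queryReads w t_q (memExec w n U g (T.sort (· ≤ ·)) (P S)) addr)
        = decide (S ∩ T = ∅))
    (S : Finset (Fin n)) :
    let Mstar := memExec w n U g ((Sᶜ).sort (· ≤ ·)) (P S)
    let C := Finset.image (queryAddr w t_q Mstar addr) Finset.univ
    ∀ T : Finset (Fin n),
      let MT := memExec w n U g (T.sort (· ≤ ·)) (P S)
      (∀ c ∈ C, MT c = Mstar c) →
        Finset.image (queryAddr w t_q MT addr) Finset.univ = C ∧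
        ans (queryReads w t_q MT addr) = true ∧
        S ∩ T = ∅ :=
  memoryless_disjointness_decoding_general
    (mem := fun T => memExec w n U g (T.sort (· ≤ ·)) (P S)) (hsolve S) (Finset.inter_compl S)
end

section
/- Any depth-2 circuit C (with unbounded fan-in and fan-out and arbitrary gate functions) that computes the multiplication of two q×q matrices over GF(2) has size (number of wires) s(C) ≥ q³. (Writing n = q² for the number of entries per matrix, this is the bound s(C) ≥ n^{3/2}.) -/
/-- A depth-2 circuit with input index type `I` and output index type `O`: a finite type `G`
of interior gates; each gate `g` reads the inputs in the finite set `S g` and computes an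
arbitrary function `f g` of them; each output `o` reads the gates in the finite set `T o`
and computes an arbitrary function `h o` of their values.  Gates have unbounded fan-in and
fan-out. -/
structure Depth2Circuit (I O : Type) where
  G : Type
  [fintypeG : Fintype G]
  S : G → Finset I
  f : (g : G) → (↥(S g) → ZMod 2) → ZMod 2
  T : O → Finset G
  h : (o : O) → (↥(T o) → ZMod 2) → ZMod 2

attribute [instance] Depth2Circuit.fintypeG

/-- The value computed by interior gate `g` on input `x`. -/
def Depth2Circuit.gateOut {I O : Type} (C : Depth2Circuit I O)
    (x : I → ZMod 2) (g : C.G) : ZMod 2 :=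
  C.f g (fun i => x i.val)

/-- The value of output `o` on input `x`. -/
def Depth2Circuit.out {I O : Type} (C : Depth2Circuit I O)
    (x : I → ZMod 2) (o : O) : ZMod 2 :=
  C.h o (fun g => C.gateOut x g.val)

/-- The size of a depth-2 circuit: the total number of wires. -/
def Depth2Circuit.size {I O : Type} [Fintype O] (C : Depth2Circuit I O) : ℕ :=
  (∑ g : C.G, (C.S g).card) + (∑ o : O, (C.T o).card)

/-- The input index type for `q × q` matrix multiplication: `Sum.inl (i, j)` indexes the
entry `A i j` of the first matrix, `Sum.inr (k, l)` the entry `B k l` of the second. -/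
abbrev MMInput (q : ℕ) := (Fin q × Fin q) ⊕ (Fin q × Fin q)

/-- The input assignment encoding a pair of matrices `A, B`. -/
def mmInput {q : ℕ} (A B : Matrix (Fin q) (Fin q) (ZMod 2)) : MMInput q → ZMod 2 :=
  Sum.elim (fun ij => A ij.1 ij.2) (fun kl => B kl.1 kl.2)

/-- A depth-2 circuit computes `q × q` matrix multiplication over `GF(2)` if on every pair
of input matrices `A, B`, the output indexed by `(i, ℓ)` equals `(A * B) i ℓ`. -/
def ComputesMM {q : ℕ} (C : Depth2Circuit (MMInput q) (Fin q × Fin q)) : Prop :=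
  ∀ A B : Matrix (Fin q) (Fin q) (ZMod 2), ∀ i ℓ : Fin q,
    C.out (mmInput A B) (i, ℓ) = (A * B) i ℓ

/-!
Feed the circuit a fixed first matrix and a second matrix `B`, then flip single entries of row `i`
of the first matrix. Starting from `0`, flipping entry `(i, j)` makes row `i` of the product equal
to row `j` of `B`, so these runs together determine `B`. On the other hand, the gates feeding the
outputs of row `i` each have one value before the flips, and a gate can take a new value only under
the flip of an entry that it reads. All the values observed thus fit into one bit per wire into the
outputs of row `i` and one bit per wire out of row `i` of the first matrix, and there must be at
least as many such wires as `B` has entries. Different rows use different wires.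
-/

namespace Depth2Circuit

variable {I O : Type} (C : Depth2Circuit I O)

theorem gateOut_congr {x y : I → ZMod 2} {g : C.G} (h : ∀ i ∈ C.S g, x i = y i) :
    C.gateOut x g = C.gateOut y g :=
  congrArg (C.f g) (funext fun i => h i i.2)

theorem out_congr {x y : I → ZMod 2} {o : O}
    (h : ∀ g ∈ C.T o, C.gateOut x g = C.gateOut y g) : C.out x o = C.out y o :=
  congrArg (C.h o) (funext fun g => h g g.2)

variable [DecidableEq I]

theorem gateOut_add_single_of_notMem {r : I} {g : C.G} (hr : r ∉ C.S g) (x : I → ZMod 2) :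
    C.gateOut (x + Pi.single r 1) g = C.gateOut x g :=
  C.gateOut_congr fun i hi => by
    rw [Pi.add_apply, Pi.single_eq_of_ne (ne_of_mem_of_not_mem hi hr), add_zero]

theorem out_add_single_congr {x y : I → ZMod 2} {r : I} {o : O}
    (hbase : ∀ g ∈ C.T o, C.gateOut x g = C.gateOut y g)
    (hflip : ∀ g ∈ C.T o, r ∈ C.S g →
      C.gateOut (x + Pi.single r 1) g = C.gateOut (y + Pi.single r 1) g) :
    C.out (x + Pi.single r 1) o = C.out (y + Pi.single r 1) o :=
  C.out_congr fun g hg => by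
    by_cases hr : r ∈ C.S g
    · exact hflip g hg hr
    · rw [C.gateOut_add_single_of_notMem hr, C.gateOut_add_single_of_notMem hr, hbase g hg]

/-- The number of wires from the inputs in `R` to gates plus the number of wires from gates to the
outputs in `W`: the part of the circuit's size charged to the block with inputs `R` and
outputs `W`. -/
def wireCount (R : Finset I) (W : Finset O) : ℕ :=
  ∑ g, (C.S g ∩ R).card + ∑ o ∈ W, (C.T o).card

theorem card_le_two_pow_wireCount_of_injective {X : Type*} [Fintype X] {R : Finset I} {W : Finset O}
    (x : X → I → ZMod 2)
    (hx : Function.Injective fun b (p : R × W) => C.out (x b + Pi.single p.1.1 1) p.2.1) :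
    Fintype.card X ≤ 2 ^ C.wireCount R W := by
  classical
  let flipped (b : X) (k : Σ g, ↥(C.S g ∩ R)) : ZMod 2 :=
    C.gateOut (x b + Pi.single k.2.1 1) k.1
  let base (b : X) (k : Σ o : W, ↥(C.T o)) : ZMod 2 := C.gateOut (x b) k.2
  have hinj : Function.Injective fun b => (flipped b, base b) := by
    intro b b' h
    obtain ⟨hflipped, hbase⟩ := Prod.mk.inj h
    refine hx (funext fun ⟨r, o⟩ => C.out_add_single_congr ?_ ?_)
    · exact fun g hg => congrFun hbase ⟨o, g, hg⟩
    · exact fun g _ hr => congrFun hflipped ⟨g, r, Finset.mem_inter.2 ⟨hr, r.2⟩⟩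
  calc Fintype.card X
      ≤ Fintype.card (((Σ g, ↥(C.S g ∩ R)) → ZMod 2) × ((Σ o : W, ↥(C.T o)) → ZMod 2)) :=
        Fintype.card_le_of_injective _ hinj
    _ = 2 ^ C.wireCount R W := by
        simp only [wireCount, Fintype.card_prod, Fintype.card_fun, ZMod.card, Fintype.card_sigma,
          Fintype.card_coe, pow_add, Finset.sum_coe_sort W fun o => (C.T o).card]

theorem card_le_wireCount_of_forall_exists_out_eq {J : Type*} [Fintype J] {R : Finset I}
    {W : Finset O} (x : (J → ZMod 2) → I → ZMod 2)
    (hx : ∀ k, ∃ r ∈ R, ∃ o ∈ W, ∀ b, C.out (x b + Pi.single r 1) o = b k) :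
    Fintype.card J ≤ C.wireCount R W := by
  classical
  have hcard := C.card_le_two_pow_wireCount_of_injective (R := R) (W := W) x fun b b' h => by
    ext k
    obtain ⟨r, hr, o, ho, hout⟩ := hx k
    rw [← hout b, ← hout b']
    exact congrFun h (⟨r, hr⟩, ⟨o, ho⟩)
  rwa [Fintype.card_fun, ZMod.card, Nat.pow_le_pow_iff_right one_lt_two] at hcard

theorem sum_wireCount_le_size [Fintype O] {ι : Type*} [Fintype ι] {R : ι → Finset I}
    {W : ι → Finset O} (hR : Pairwise fun i j => Disjoint (R i) (R j))
    (hW : Pairwise fun i j => Disjoint (W i) (W j)) :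
    ∑ i, C.wireCount (R i) (W i) ≤ C.size := by
  classical
  simp only [wireCount, size]
  rw [Finset.sum_add_distrib, Finset.sum_comm]
  refine add_le_add (Finset.sum_le_sum fun g _ => ?_) ?_
  · rw [← Finset.card_biUnion fun i _ j _ hij =>
      (hR hij).mono Finset.inter_subset_right Finset.inter_subset_right]
    exact Finset.card_le_card (Finset.biUnion_subset.2 fun _ _ => Finset.inter_subset_left)
  · rw [← Finset.sum_biUnion fun i _ j _ hij => hW hij]
    exact Finset.sum_le_univ_sum_of_nonneg fun _ => Nat.zero_le _

end Depth2Circuit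

theorem elim_uncurry_matrixSingle {m n p R : Type*} [DecidableEq m] [DecidableEq n]
    [DecidableEq p] [AddZeroClass R] (i : m) (j : n) (a : R) (b : n × p → R) :
    Sum.elim (Function.uncurry (Matrix.single i j a)) b =
      Sum.elim (0 : m × n → R) b + Pi.single (Sum.inl (i, j)) a := by
  ext (⟨i', j'⟩ | k)
  · simp [Function.uncurry, Matrix.single_apply, Pi.single_apply, eq_comm]
  · simp

theorem matrix_multiplication_wire_lb_general {m n p : Type} [Fintype m] [Fintype n] [Fintype p]
    [DecidableEq m] [DecidableEq n] (C : Depth2Circuit ((m × n) ⊕ (n × p)) (m × p))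
    (hC : ∀ i j (B : Matrix n p (ZMod 2)) l,
      C.out (Sum.elim (Function.uncurry (Matrix.single i j 1)) (Function.uncurry B)) (i, l) =
        (Matrix.single i j (1 : ZMod 2) * B) i l) :
    Fintype.card m * Fintype.card n * Fintype.card p ≤ C.size := by
  classical
  let R (i : m) : Finset ((m × n) ⊕ (n × p)) := ({i} ×ˢ Finset.univ).map .inl
  let W (i : m) : Finset (m × p) := {i} ×ˢ Finset.univ
  have hrow (i : m) : Fintype.card (n × p) ≤ C.wireCount (R i) (W i) := by
    refine C.card_le_wireCount_of_forall_exists_out_eq (Sum.elim 0) fun ⟨j, l⟩ =>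
      ⟨.inl (i, j), by simp [R], (i, l), by simp [W], fun b => ?_⟩
    rw [← elim_uncurry_matrixSingle]
    exact (hC i j (Matrix.of (Function.curry b)) l).trans (by simp)
  have hW : Pairwise fun i i' => Disjoint (W i) (W i') := fun _ _ hne =>
    Finset.disjoint_product.2 (.inl (Finset.disjoint_singleton.2 hne))
  have hR : Pairwise fun i i' => Disjoint (R i) (R i') := fun _ _ hne =>
    (Finset.disjoint_map _).2 (Finset.disjoint_product.2 (.inl (Finset.disjoint_singleton.2 hne)))
  calc Fintype.card m * Fintype.card n * Fintype.card p
      = ∑ _i : m, Fintype.card (n × p) := by simp [mul_assoc]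
    _ ≤ ∑ i, C.wireCount (R i) (W i) := Finset.sum_le_sum fun i _ => hrow i
    _ ≤ C.size := C.sum_wireCount_le_size hR hW

/-- Any depth-2 circuit (with unbounded fan-in/fan-out and arbitrary gate functions)
computing the multiplication of two `q × q` matrices over `GF(2)` has at least `q ^ 3`
wires; with `n = q ^ 2` inputs per matrix this is the bound `s(C) ≥ n^{3/2}`. -/
theorem matrix_multiplication_wire_lb
    (q : ℕ) (C : Depth2Circuit (MMInput q) (Fin q × Fin q))
    (hC : ComputesMM C) :
    q ^ 3 ≤ C.size := by
  simpa [pow_three'] using matrix_multiplication_wire_lb_general C fun i _ B l => hC _ B i l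
end

section
/- If there is a linear data structure for a linear operator F : (Fin n → ZMod 2) → (Fin m → ZMod 2) with query time t_q and update time t_u, then there exists a depth-2 linear circuit computing F whose size satisfies s(C) ≤ n·t_u + m·t_q. Concretely: if F(x) = Q.mulVec (U.mulVec x) for matrices U : Matrix (Fin r) (Fin n) (ZMod 2) and Q : Matrix (Fin m) (Fin r) (ZMod 2) such that every column of U has at most t_u nonzero entries and every row of Q has at most t_q nonzero entries, then there is a depth-2 linear circuit with interior gate set Fin r computing F whose number of wires is at most n·t_u + m·t_q. -/
/-!
Take the cells as interior gates: a gate is wired to the inputs whose updates flip its cell, and an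
output is wired to the cells its query probes. The wires between inputs and gates are the nonzero
entries of `U`; counted by columns instead of by gates, they are at most `t_u` per input.
-/

section

open Finset Matrix

variable {l m n R : Type*} [Fintype n]

theorem mulVec_apply_eq_sum_filter_ne_zero [NonAssocSemiring R] [DecidableEq R]
    {A : Matrix m n R} {i : m} (hA : ∀ j, A i j = 0 ∨ A i j = 1) (v : n → R) :
    (A *ᵥ v) i = ∑ j with A i j ≠ 0, v j := by
  rw [mulVec, dotProduct, sum_filter]
  refine sum_congr rfl fun j _ => ?_
  by_cases h : A i j = 0
  · rw [if_neg (not_not.mpr h), h, zero_mul]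
  · rw [if_pos h, (hA j).resolve_left h, one_mul]

variable [Fintype m]

theorem sum_card_row_ne_zero_le [Zero R] [DecidableEq R] (A : Matrix m n R) {k : ℕ}
    (hA : ∀ j, #{i | A i j ≠ 0} ≤ k) : ∑ i, #{j | A i j ≠ 0} ≤ Fintype.card n * k :=
  calc ∑ i, #{j | A i j ≠ 0}
      = ∑ j, #{i | A i j ≠ 0} := by simp only [card_filter]; exact sum_comm
    _ ≤ Fintype.card n * k := sum_le_card_nsmul univ _ k fun j _ => hA j

theorem linear_ds_to_linear_circuit_general [Fintype l] [NonAssocSemiring R] [DecidableEq R]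
    {t_u t_q : ℕ} {F : (n → R) → (m → R)} {U : Matrix l n R} {Q : Matrix m l R}
    (hU01 : ∀ c i, U c i = 0 ∨ U c i = 1) (hQ01 : ∀ j c, Q j c = 0 ∨ Q j c = 1)
    (hF : ∀ x, F x = Q *ᵥ (U *ᵥ x))
    (hU : ∀ i, #{c | U c i ≠ 0} ≤ t_u) (hQ : ∀ j, #{c | Q j c ≠ 0} ≤ t_q) :
    ∃ (S : l → Finset n) (T : m → Finset l),
      (∀ x j, ∑ g ∈ T j, ∑ i ∈ S g, x i = F x j) ∧
      ∑ g, #(S g) + ∑ j, #(T j) ≤ Fintype.card n * t_u + Fintype.card m * t_q := by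
  refine ⟨fun g => {i | U g i ≠ 0}, fun j => {c | Q j c ≠ 0}, fun x j => ?_, ?_⟩
  · simp only [hF, mulVec_apply_eq_sum_filter_ne_zero (hQ01 _),
      mulVec_apply_eq_sum_filter_ne_zero (hU01 _)]
  · have input_wires : ∑ g, #{i | U g i ≠ 0} ≤ Fintype.card n * t_u :=
      sum_card_row_ne_zero_le U hU
    have output_wires : ∑ j, #{c | Q j c ≠ 0} ≤ Fintype.card m * t_q :=
      sum_le_card_nsmul univ _ t_q fun j _ => hQ j
    exact add_le_add input_wires output_wires

end

/-- If there is a linear data structure for a linear operator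
`F : (Fin n → ZMod 2) → (Fin m → ZMod 2)` with `r` cells, given by an update matrix `U`
(each column having at most `t_u` nonzero entries, the cells flipped by the update) and a
query matrix `Q` (each row having at most `t_q` nonzero entries, the cells probed by the
query) with `F x = Q.mulVec (U.mulVec x)`, then there is a depth-2 linear circuit with
interior gate set `Fin r` computing `F` — given by input sets `S g ⊆ Fin n` of the gates
and gate sets `T j ⊆ Fin r` of the outputs, where gate `g` outputs `∑ i ∈ S g, x i` and
output `j` equals `∑ g ∈ T j, ∑ i ∈ S g, x i` — whose number of wires is at most
`n * t_u + m * t_q`. -/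
theorem linear_ds_to_linear_circuit
    (n m r t_u t_q : ℕ)
    (F : (Fin n → ZMod 2) → (Fin m → ZMod 2))
    (U : Matrix (Fin r) (Fin n) (ZMod 2))
    (Q : Matrix (Fin m) (Fin r) (ZMod 2))
    (hF : ∀ x, F x = Q.mulVec (U.mulVec x))
    (hU : ∀ i : Fin n, (Finset.univ.filter (fun c => U c i ≠ 0)).card ≤ t_u)
    (hQ : ∀ j : Fin m, (Finset.univ.filter (fun c => Q j c ≠ 0)).card ≤ t_q) :
    ∃ (S : Fin r → Finset (Fin n)) (T : Fin m → Finset (Fin r)),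
      (∀ (x : Fin n → ZMod 2) (j : Fin m),
        (∑ g ∈ T j, ∑ i ∈ S g, x i) = F x j) ∧
      (∑ g : Fin r, (S g).card) + (∑ j : Fin m, (T j).card) ≤ n * t_u + m * t_q := by
  have zero_or_one : ∀ a : ZMod 2, a = 0 ∨ a = 1 := by decide
  simpa only [Fintype.card_fin] using linear_ds_to_linear_circuit_general
    (fun _ _ => zero_or_one _) (fun _ _ => zero_or_one _) hF hU hQ
end
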